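/- Let α ∈ (0,1), p ∈ (0,∞], q ∈ [1,∞), and set ϑ = min{2/q, p/(p+1)}. Let 𝒳 be a standard Borel space and Q a probability measure on 𝒳 × ℝ with marginal Q_X on 𝒳 such that Q has an α-quantile of p-average type q; denote by t* : 𝒳 → ℝ the measurable function with t*(x) the (unique) α-quantile of Q(· | X = x), and by γ : 𝒳 → (0,∞] the function γ(x) = b_{Q(·|X=x)} · a_{Q(·|X=x)}^{q−1}, with ‖γ^{-1}‖_{p,Q_X} < ∞. Then for every measurable function ψ : 𝒳 → [−1,1]: ∫ (L^α(ψ) − L^α(t*))² dQ ≤ 2^{2−ϑ} · q^ϑ · ‖γ^{-1}‖_{p,Q_X}^ϑ · ( ∫ (L^α(ψ) − L^α(t*)) dQ )^ϑ. -/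

import Mathlib

open MeasureTheory ProbabilityTheory Real
open scoped ENNReal

/-- The quantile (pinball) loss of a prediction `t` for an outcome `y` at level `α`. -/
noncomputable def pinball (α y t : ℝ) : ℝ :=
  if t < y then α * (y - t) else (1 - α) * (t - y)

/-- The `α`-quantile set of a measure `Q` on `ℝ`. -/
def quantileSet (α : ℝ) (Q : Measure ℝ) : Set ℝ :=
  {t : ℝ | ENNReal.ofReal α ≤ Q (Set.Iic t) ∧ ENNReal.ofReal (1 - α) ≤ Q (Set.Ici t)}

lemma measurable_pinball (α : ℝ) : Measurable fun z : ℝ × ℝ => pinball α z.1 z.2 := by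
  unfold pinball
  exact Measurable.ite (measurableSet_lt measurable_snd measurable_fst) (by fun_prop) (by fun_prop)

lemma abs_pinball_sub_le {α : ℝ} (hα : α ∈ Set.Ioo (0 : ℝ) 1) (y t u : ℝ) :
    |pinball α y t - pinball α y u| ≤ |t - u| := by
  obtain ⟨h0, h1⟩ := hα
  unfold pinball
  rcases abs_cases (t - u) with ⟨h, h'⟩ | ⟨h, h'⟩ <;> rw [h, abs_le] <;>
    split_ifs <;> constructor <;> nlinarith

/-- A power-type lower bound on the tail probabilities of `f` integrates to a lower bound on its
expectation. -/
lemma mul_rpow_div_le_integral_of_tail (μ : Measure ℝ) [IsFiniteMeasure μ] {f : ℝ → ℝ}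
    (hf : Integrable f μ) (hf0 : ∀ y, 0 ≤ f y) {c δ q : ℝ} (hc : 0 ≤ c) (hδ : 0 ≤ δ) (hq : 1 ≤ q)
    (h : ∀ u ∈ Set.Ioo 0 δ, ENNReal.ofReal (c * (δ - u) ^ (q - 1)) ≤ μ {y | u < f y}) :
    c * (δ ^ q / q) ≤ ∫ y, f y ∂μ := by
  have hcont : Continuous fun u : ℝ => c * (δ - u) ^ (q - 1) :=
    continuous_const.mul ((continuous_const.sub continuous_id).rpow_const
      fun _ => Or.inr (by linarith))
  have h_int : ∫ u in Set.Ioo 0 δ, c * (δ - u) ^ (q - 1) = c * (δ ^ q / q) := by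
    rw [← integral_Ioc_eq_integral_Ioo, ← intervalIntegral.integral_of_le hδ,
      intervalIntegral.integral_const_mul,
      intervalIntegral.integral_comp_sub_left (fun u => u ^ (q - 1)),
      integral_rpow (Or.inl (by linarith))]
    simp [Real.zero_rpow (by linarith : q ≠ 0)]
  rw [← h_int, ← ENNReal.ofReal_le_ofReal_iff (integral_nonneg hf0),
    ofReal_integral_eq_lintegral_ofReal hf (.of_forall hf0),
    lintegral_eq_lintegral_meas_lt μ (.of_forall hf0) hf.aemeasurable,
    ofReal_integral_eq_lintegral_ofReal]
  · calc _ ≤ ∫⁻ u in Set.Ioo 0 δ, μ {y | u < f y} := setLIntegral_mono' measurableSet_Ioo h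
      _ ≤ _ := lintegral_mono_set Set.Ioo_subset_Ioi_self
  · exact (hcont.integrableOn_Icc).mono_set Set.Ioo_subset_Icc_self
  · refine (ae_restrict_mem measurableSet_Ioo).mono fun u hu => ?_
    exact mul_nonneg hc (Real.rpow_nonneg (by linarith [hu.2]) _)

/-- If `μ S ≥ β` and `g = δ (1_S - β) + f` with `δ ≥ 0`, then the expectation of `g` is at least
that of `f`. -/
lemma integral_le_integral_of_eq_indicator_add (μ : Measure ℝ) [IsProbabilityMeasure μ]
    {f g : ℝ → ℝ} (hf : Integrable f μ) {S : Set ℝ} (hS : MeasurableSet S) {β δ : ℝ}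
    (hδ : 0 ≤ δ) (hβ : ENNReal.ofReal β ≤ μ S)
    (hg : ∀ y, g y = (S.indicator (fun _ => δ) y - β * δ) + f y) :
    ∫ y, f y ∂μ ≤ ∫ y, g y ∂μ := by
  have hi : Integrable (S.indicator fun _ => δ) μ := (integrable_const δ).indicator hS
  have hi' : Integrable (fun y => S.indicator (fun _ => δ) y - β * δ) μ :=
    hi.sub (integrable_const _)
  simp_rw [hg]
  rw [integral_add hi' hf, integral_sub hi (integrable_const _), integral_indicator_const _ hS]
  have : β ≤ μ.real S := (ENNReal.ofReal_le_iff_le_toReal (measure_ne_top μ S)).1 hβ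
  simp only [integral_const, probReal_univ, smul_eq_mul, one_mul]
  nlinarith

/-- Self-calibration inequality for the pinball loss at a quantile of type `q`. -/
lemma rpow_abs_sub_le_mul_integral_pinball_sub {α : ℝ} (μ : Measure ℝ)
    [IsProbabilityMeasure μ] {t u a b q : ℝ} (hq : 1 ≤ q) (hb : 0 < b)
    (ha : a ∈ Set.Ioc (0 : ℝ) 2) (hu : u ∈ quantileSet α μ)
    (htype : ∀ s ∈ Set.Icc 0 a,
      ENNReal.ofReal (b * s ^ (q - 1)) ≤ μ (Set.Ioo (u - s) u) ∧
      ENNReal.ofReal (b * s ^ (q - 1)) ≤ μ (Set.Ioo u (u + s)))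
    (htu : |t - u| ≤ 2) :
    |t - u| ^ q ≤ 2 ^ (q - 1) * q * (b * a ^ (q - 1))⁻¹ *
      ∫ y, (pinball α y t - pinball α y u) ∂μ := by
  obtain ⟨ha0, ha2⟩ := ha
  have hq0 : 0 ≤ q - 1 := by linarith
  set c : ℝ := b * a ^ (q - 1) / 2 ^ (q - 1) with hc
  have hc0 : 0 < c := by positivity
  have hlow : ∀ s ∈ Set.Ioc (0 : ℝ) 2, c * s ^ (q - 1) ≤ b * (min s a) ^ (q - 1) := by
    rintro s ⟨hs0, hs2⟩
    have h1 : c * s ^ (q - 1) = b * (a * s / 2) ^ (q - 1) := by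
      rw [hc, Real.div_rpow (by positivity) (by norm_num), Real.mul_rpow ha0.le hs0.le]
      ring
    rw [h1]
    have : a * s / 2 ≤ min s a := le_min (by nlinarith) (by nlinarith)
    gcongr
  have htail : ∀ s ∈ Set.Ioc (0 : ℝ) 2,
      ENNReal.ofReal (c * s ^ (q - 1)) ≤ μ (Set.Ioo (u - s) u) ∧
      ENNReal.ofReal (c * s ^ (q - 1)) ≤ μ (Set.Ioo u (u + s)) := by
    intro s hs
    have h1 := htype (min s a) ⟨le_min hs.1.le ha0.le, min_le_right _ _⟩
    have h2 := ENNReal.ofReal_le_ofReal (hlow s hs)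
    have h3 : min s a ≤ s := min_le_left _ _
    exact ⟨h2.trans (h1.1.trans (measure_mono (Set.Ioo_subset_Ioo_left (by linarith)))),
      h2.trans (h1.2.trans (measure_mono (Set.Ioo_subset_Ioo_right (by linarith))))⟩
  have key : c * (|t - u| ^ q / q) ≤ ∫ y, (pinball α y t - pinball α y u) ∂μ := by
    rcases le_total u t with h | h
    · rw [abs_of_nonneg (sub_nonneg.2 h)] at htu ⊢
      have hf : Integrable ((Set.Ioo u t).indicator fun y => t - y) μ := by
        refine Integrable.of_bound
          ((measurable_const.sub measurable_id).indicator measurableSet_Ioo).aestronglyMeasurable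
          (t - u) (.of_forall fun y => ?_)
        simp only [Set.indicator, Set.mem_Ioo]
        split_ifs with hy
        · rw [Real.norm_of_nonneg] <;> linarith
        · simpa using h
      refine (mul_rpow_div_le_integral_of_tail μ hf ?_ hc0.le (by linarith) hq ?_).trans
        (integral_le_integral_of_eq_indicator_add μ hf (S := Set.Iic u) measurableSet_Iic
          (sub_nonneg.2 h) hu.1 fun y => ?_)
      · exact fun y => Set.indicator_nonneg (fun y hy => by linarith [hy.2]) y
      · intro s hs
        refine (htail (t - u - s) ⟨by linarith [hs.2], by linarith [hs.1]⟩).2.trans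
          (measure_mono fun y hy => ?_)
        have hy' : y ∈ Set.Ioo u t := ⟨hy.1, by linarith [hy.2, hs.1]⟩
        simp only [Set.mem_ofPred_eq, Set.indicator_of_mem hy']
        linarith [hy.2]
      · simp only [pinball, Set.indicator, Set.mem_Ioo, Set.mem_Iic]
        split_ifs <;> grind
    · rw [abs_of_nonpos (sub_nonpos.2 h), neg_sub] at htu ⊢
      have hf : Integrable ((Set.Ioo t u).indicator fun y => y - t) μ := by
        refine Integrable.of_bound
          ((measurable_id'.sub measurable_const).indicator measurableSet_Ioo).aestronglyMeasurable
          (u - t) (.of_forall fun y => ?_)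
        simp only [Set.indicator, Set.mem_Ioo]
        split_ifs with hy
        · rw [Real.norm_of_nonneg] <;> linarith
        · simpa using h
      refine (mul_rpow_div_le_integral_of_tail μ hf ?_ hc0.le (by linarith) hq ?_).trans
        (integral_le_integral_of_eq_indicator_add μ hf (S := Set.Ici u) measurableSet_Ici
          (sub_nonneg.2 h) hu.2 fun y => ?_)
      · exact fun y => Set.indicator_nonneg (fun y hy => by linarith [hy.1]) y
      · intro s hs
        refine (htail (u - t - s) ⟨by linarith [hs.2], by linarith [hs.1]⟩).1.trans
          (measure_mono fun y hy => ?_)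
        have hy' : y ∈ Set.Ioo t u := ⟨by linarith [hy.1, hs.1], hy.2⟩
        simp only [Set.mem_ofPred_eq, Set.indicator_of_mem hy']
        linarith [hy.1]
      · simp only [pinball, Set.indicator, Set.mem_Ioo, Set.mem_Ici]
        split_ifs <;> grind
  calc |t - u| ^ q = 2 ^ (q - 1) * q * (b * a ^ (q - 1))⁻¹ * (c * (|t - u| ^ q / q)) := by
        rw [hc]; field_simp
    _ ≤ _ := by gcongr

lemma quantileSet_subset_Icc {α : ℝ} (hα : α ∈ Set.Ioo (0 : ℝ) 1) {μ : Measure ℝ} {l r : ℝ}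
    (hμ : μ (Set.Icc l r)ᶜ = 0) : quantileSet α μ ⊆ Set.Icc l r := by
  rintro t ⟨h1, h2⟩
  constructor <;> by_contra! h
  · have hsub : Set.Iic t ⊆ (Set.Icc l r)ᶜ := fun y hy hy' => (hy'.1.trans hy).not_gt h
    simp only [measure_mono_null hsub hμ, nonpos_iff_eq_zero, ENNReal.ofReal_eq_zero] at h1
    exact hα.1.not_ge h1
  · have hsub : Set.Ici t ⊆ (Set.Icc l r)ᶜ := fun y hy hy' => (hy.trans hy'.2).not_gt h
    simp only [measure_mono_null hsub hμ, nonpos_iff_eq_zero, ENNReal.ofReal_eq_zero] at h2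
    linarith [hα.2]

/-- Hölder's inequality with exponents `p` and `1`, lowered to an exponent `ϑ ≤ p / (p + 1)`.
No measurability is required of `g`. -/
lemma integral_rpow_le_of_le_mul_mul {Ω : Type*} [MeasurableSpace Ω] (μ : Measure Ω)
    [IsProbabilityMeasure μ] {p : ℝ≥0∞} (hp : 0 < p) {ϑ K : ℝ} (hϑ0 : 0 < ϑ)
    (hϑ : ϑ ≤ if p = ∞ then 1 else p.toReal / (p.toReal + 1)) (hK : 0 ≤ K)
    {F g E : Ω → ℝ} (hF : Measurable F) (hF0 : ∀ᵐ x ∂μ, 0 ≤ F x)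
    (hEm : Measurable E) (hE : Integrable E μ) (hE0 : ∀ᵐ x ∂μ, 0 ≤ E x)
    (hg : eLpNorm g p μ ≠ ∞) (hle : ∀ᵐ x ∂μ, F x ≤ K * g x * E x) :
    Integrable (fun x => F x ^ ϑ) μ ∧
    ∫ x, F x ^ ϑ ∂μ ≤ (K * (eLpNorm g p μ).toReal * ∫ x, E x ∂μ) ^ ϑ := by
  set h : Ω → ℝ := fun x => F x / E x with hh
  have hhm : Measurable h := hF.div hEm
  have hFh : F =ᵐ[μ] h • E := by
    filter_upwards [hF0, hE0, hle] with x h1 h2 h3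
    rcases h2.eq_or_lt with h4 | h4
    · simp only [← h4, mul_zero] at h3
      simp [hh, ← h4, le_antisymm h3 h1]
    · simp [hh, h4.ne']
  have hhg : eLpNorm h p μ ≤ ENNReal.ofReal K * eLpNorm g p μ := by
    refine eLpNorm_le_mul_eLpNorm_of_ae_le_mul ?_ p
    filter_upwards [hF0, hE0, hle] with x h1 h2 h3
    rw [Real.norm_of_nonneg (div_nonneg h1 h2)]
    refine div_le_of_le_mul₀ h2 (by positivity) (h3.trans ?_)
    gcongr
    exact Real.le_norm_self _
  set r : ℝ≥0∞ := (p⁻¹ + 1)⁻¹ with hr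
  have : ENNReal.HolderTriple p 1 r := ⟨by simp [hr]⟩
  have hϑr : ENNReal.ofReal ϑ ≤ r := by
    split_ifs at hϑ with hpt
    · simpa [hr, hpt] using hϑ
    · have hp' : 0 < p.toReal := ENNReal.toReal_pos hp.ne' hpt
      have : r = ENNReal.ofReal (p.toReal / (p.toReal + 1)) := by
        rw [hr, ← ENNReal.ofReal_toReal hpt, ENNReal.toReal_ofReal hp'.le,
          ← ENNReal.ofReal_inv_of_pos hp', ← ENNReal.ofReal_one,
          ← ENNReal.ofReal_add (by positivity) zero_le_one,
          ← ENNReal.ofReal_inv_of_pos (by positivity)]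
        congr 1
        field_simp
        ring
      rw [this]
      exact ENNReal.ofReal_le_ofReal hϑ
  have hE1 : eLpNorm E 1 μ = ENNReal.ofReal (∫ x, E x ∂μ) := by
    rw [eLpNorm_one_eq_lintegral_enorm, ← ofReal_integral_norm_eq_lintegral_enorm hE]
    congr 1
    exact integral_congr_ae (hE0.mono fun x hx => Real.norm_of_nonneg hx)
  have hEI : 0 ≤ ∫ x, E x ∂μ := integral_nonneg_of_ae hE0
  have hmain : eLpNorm F (ENNReal.ofReal ϑ) μ ≤
      ENNReal.ofReal (K * (eLpNorm g p μ).toReal * ∫ x, E x ∂μ) := by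
    calc eLpNorm F (ENNReal.ofReal ϑ) μ ≤ eLpNorm F r μ :=
          eLpNorm_le_eLpNorm_of_exponent_le hϑr hF.aestronglyMeasurable
      _ = eLpNorm (h • E) r μ := eLpNorm_congr_ae hFh
      _ ≤ eLpNorm h p μ * eLpNorm E 1 μ :=
          eLpNorm_smul_le_mul_eLpNorm hEm.aestronglyMeasurable hhm.aestronglyMeasurable
      _ ≤ ENNReal.ofReal K * eLpNorm g p μ * ENNReal.ofReal (∫ x, E x ∂μ) := by
          rw [hE1]; gcongr
      _ = _ := by
          rw [ENNReal.ofReal_mul (by positivity), ENNReal.ofReal_mul hK, ENNReal.ofReal_toReal hg]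
  have hϑ0' : ENNReal.ofReal ϑ ≠ 0 := by simpa using hϑ0
  have hmem : MemLp F (ENNReal.ofReal ϑ) μ :=
    ⟨hF.aestronglyMeasurable, hmain.trans_lt ENNReal.ofReal_lt_top⟩
  have hcongr : (fun x => ‖F x‖ ^ ϑ) =ᵐ[μ] fun x => F x ^ ϑ :=
    hF0.mono fun x hx => by simp only [Real.norm_of_nonneg hx]
  have h_int := hmem.integrable_norm_rpow hϑ0' ENNReal.ofReal_ne_top
  rw [hmem.eLpNorm_eq_integral_rpow_norm hϑ0' ENNReal.ofReal_ne_top,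
    ENNReal.ofReal_le_ofReal_iff (by positivity)] at hmain
  rw [ENNReal.toReal_ofReal hϑ0.le] at h_int hmain
  rw [integral_congr_ae hcongr] at hmain
  have hI : 0 ≤ ∫ x, F x ^ ϑ ∂μ :=
    integral_nonneg_of_ae (hF0.mono fun x hx => Real.rpow_nonneg hx _)
  exact ⟨h_int.congr hcongr, (Real.rpow_inv_le_iff_of_pos hI (by positivity) hϑ0).1 hmain⟩

/-- Steinwart–Christmann variance bound for the quantile loss: if `Q` has an `α`-quantile
of `p`-average type `q` (conditional quantiles `t*`, type-`q` constants `b_Q(x)`, `a_Q(x)`,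
`γ(x) = b_Q(x) a_Q(x)^{q-1}` with `‖γ⁻¹‖_{p,Q_X} < ∞`), then for every measurable
`ψ : 𝒳 → [-1,1]`,
`∫ (ΔL)² dQ ≤ 2^{2-ϑ} q^ϑ ‖γ⁻¹‖_{p,Q_X}^ϑ (∫ ΔL dQ)^ϑ` where `ϑ = min{2/q, p/(p+1)}`. -/
theorem stmt8 {𝒳 : Type*} [MeasurableSpace 𝒳] [StandardBorelSpace 𝒳]
    (α : ℝ) (hα : α ∈ Set.Ioo (0 : ℝ) 1)
    (p : ℝ≥0∞) (hp : 0 < p) (q : ℝ) (hq : 1 ≤ q)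
    (ϑ : ℝ) (hϑ : ϑ = min (2 / q) (if p = ∞ then 1 else p.toReal / (p.toReal + 1)))
    (Q : Measure (𝒳 × ℝ)) [IsProbabilityMeasure Q]
    -- conditional supports contained in `[-1, 1]`
    (hsupp : ∀ᵐ x ∂(Q.map Prod.fst),
      condDistrib Prod.snd Prod.fst Q x (Set.Icc (-1 : ℝ) 1)ᶜ = 0)
    -- the conditional `α`-quantile is almost surely the unique point `t* x`
    (tstar : 𝒳 → ℝ) (htstar : Measurable tstar)
    (hsingleton : ∀ᵐ x ∂(Q.map Prod.fst),
      quantileSet α (condDistrib Prod.snd Prod.fst Q x) = {tstar x})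
    -- the conditional distributions have `α`-quantiles of type `q`
    (bQ aQ : 𝒳 → ℝ)
    (htype : ∀ᵐ x ∂(Q.map Prod.fst),
      0 < bQ x ∧ aQ x ∈ Set.Ioc (0 : ℝ) 2 ∧
      ∀ s ∈ Set.Icc (0 : ℝ) (aQ x),
        ENNReal.ofReal (bQ x * s ^ (q - 1)) ≤
          condDistrib Prod.snd Prod.fst Q x (Set.Ioo (tstar x - s) (tstar x)) ∧
        ENNReal.ofReal (bQ x * s ^ (q - 1)) ≤
          condDistrib Prod.snd Prod.fst Q x (Set.Ioo (tstar x) (tstar x + s)))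
    -- `γ⁻¹` has finite `L^p(Q_X)`-norm `Γ`
    (Γ : ℝ)
    (hΓfin : eLpNorm (fun x => (bQ x * aQ x ^ (q - 1))⁻¹) p (Q.map Prod.fst) ≠ ∞)
    (hΓ : Γ = (eLpNorm (fun x => (bQ x * aQ x ^ (q - 1))⁻¹) p (Q.map Prod.fst)).toReal)
    (ψ : 𝒳 → ℝ) (hψ : Measurable ψ) (hψbdd : ∀ x, ψ x ∈ Set.Icc (-1 : ℝ) 1) :
    (∫ o, (pinball α o.2 (ψ o.1) - pinball α o.2 (tstar o.1)) ^ 2 ∂Q) ≤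
      2 ^ (2 - ϑ) * q ^ ϑ * Γ ^ ϑ *
        (∫ o, (pinball α o.2 (ψ o.1) - pinball α o.2 (tstar o.1)) ∂Q) ^ ϑ := by
  set μ := Q.map Prod.fst with hμ
  set κ := condDistrib Prod.snd Prod.fst Q with hκ
  have : IsProbabilityMeasure μ := Measure.isProbabilityMeasure_map measurable_fst.aemeasurable
  have hQ : μ ⊗ₘ κ = Q := by
    rw [hμ, hκ, compProd_map_condDistrib measurable_snd.aemeasurable]
    exact Measure.map_id
  set D : 𝒳 × ℝ → ℝ := fun o => pinball α o.2 (ψ o.1) - pinball α o.2 (tstar o.1) with hD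
  have hDm : Measurable D :=
    ((measurable_pinball α).comp (measurable_snd.prodMk (hψ.comp measurable_fst))).sub
      ((measurable_pinball α).comp (measurable_snd.prodMk (htstar.comp measurable_fst)))
  set δ : 𝒳 → ℝ := fun x => |ψ x - tstar x| with hδ
  have hδm : Measurable δ := (hψ.sub htstar).abs
  have hδ0 : ∀ x, 0 ≤ δ x := fun x => abs_nonneg _
  have hDδ : ∀ o, |D o| ≤ δ o.1 := fun o => abs_pinball_sub_le hα _ _ _
  have hδ2 : ∀ᵐ x ∂μ, δ x ≤ 2 := by
    filter_upwards [hsupp, hsingleton] with x h1 h2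
    have h3 := quantileSet_subset_Icc hα h1 (h2.ge rfl)
    have h4 := hψbdd x
    exact abs_le.2 ⟨by linarith [h3.2, h4.1], by linarith [h3.1, h4.2]⟩
  have hDint : Integrable D Q := by
    refine Integrable.of_bound hDm.aestronglyMeasurable 2 ?_
    filter_upwards [ae_of_ae_map measurable_fst.aemeasurable hδ2] with o ho
    exact (hDδ o).trans ho
  set E : 𝒳 → ℝ := fun x => ∫ y, D (x, y) ∂κ x with hE
  have hEm : Measurable E := hDm.stronglyMeasurable.integral_kernel_prod_right'.measurable
  have hDint' : Integrable D (μ ⊗ₘ κ) := hQ.symm ▸ hDint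
  have hEint : Integrable E μ :=
    ((Measure.integrable_compProd_iff hDint'.1).1 hDint').2.mono' hEm.aestronglyMeasurable
      (.of_forall fun x => norm_integral_le_integral_norm _)
  have hEQ : ∫ o, D o ∂Q = ∫ x, E x ∂μ := by
    conv_lhs => rw [← hQ]
    exact Measure.integral_compProd hDint'
  have hq0 : 0 < q := by linarith
  set K : ℝ := 2 ^ (q - 1) * q with hK
  have hK0 : 0 < K := by positivity
  have hcal : ∀ᵐ x ∂μ, 0 < (bQ x * aQ x ^ (q - 1))⁻¹ ∧
      δ x ^ q ≤ K * (bQ x * aQ x ^ (q - 1))⁻¹ * E x := by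
    filter_upwards [hδ2, hsingleton, htype] with x h1 h2 ⟨hb, ha, h3⟩
    have := ha.1
    exact ⟨by positivity,
      rpow_abs_sub_le_mul_integral_pinball_sub (κ x) hq hb ha (h2.ge rfl) h3 h1⟩
  have hE0 : ∀ᵐ x ∂μ, 0 ≤ E x := by
    filter_upwards [hcal] with x ⟨h1, h2⟩
    exact nonneg_of_mul_nonneg_right ((Real.rpow_nonneg (hδ0 x) q).trans h2) (by positivity)
  have hϑ0 : 0 < ϑ := by
    rw [hϑ]
    refine lt_min (by positivity) ?_
    split_ifs with hpt
    · exact one_pos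
    · have := ENNReal.toReal_pos hp.ne' hpt
      positivity
  obtain ⟨h_int, hle⟩ := integral_rpow_le_of_le_mul_mul μ hp hϑ0 (hϑ.le.trans (min_le_right _ _))
    hK0.le (F := fun x => δ x ^ q) (hδm.pow_const q) (.of_forall fun x => Real.rpow_nonneg (hδ0 x) q)
    hEm hEint hE0 hΓfin (hcal.mono fun x hx => hx.2)
  rw [← hΓ] at hle
  have hϑq : q * ϑ ≤ 2 := by
    have := hϑ.le.trans (min_le_left _ _)
    rwa [le_div_iff₀ hq0, mul_comm] at this
  have hsq : ∀ᵐ x ∂μ, δ x ^ 2 ≤ 2 ^ (2 - q * ϑ) * (δ x ^ q) ^ ϑ := by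
    filter_upwards [hδ2] with x hx
    rcases (hδ0 x).eq_or_lt with h | h
    · rw [← h]
      simp only [ne_eq, OfNat.ofNat_ne_zero, not_false_eq_true, zero_pow]
      positivity
    · calc δ x ^ 2 = δ x ^ (2 - q * ϑ) * (δ x ^ q) ^ ϑ := by
            rw [← Real.rpow_mul h.le, ← Real.rpow_add h, sub_add_cancel, Real.rpow_two]
        _ ≤ _ := by
            gcongr
  have hδint : Integrable (fun x => δ x ^ 2) μ := by
    refine Integrable.of_bound (hδm.pow_const 2).aestronglyMeasurable (2 ^ 2) ?_
    filter_upwards [hδ2] with x hx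
    rw [Real.norm_of_nonneg (sq_nonneg _)]
    exact pow_le_pow_left₀ (hδ0 x) hx 2
  have hΓ0 : 0 ≤ Γ := hΓ ▸ ENNReal.toReal_nonneg
  have hEI : 0 ≤ ∫ x, E x ∂μ := integral_nonneg_of_ae hE0
  calc ∫ o, D o ^ 2 ∂Q ≤ ∫ o, δ o.1 ^ 2 ∂Q := by
        refine integral_mono_of_nonneg (.of_forall fun o => sq_nonneg _)
          (hδint.comp_measurable measurable_fst) (.of_forall fun o => ?_)
        exact sq_le_sq.2 ((hDδ o).trans (le_abs_self _))
    _ = ∫ x, δ x ^ 2 ∂μ :=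
        (integral_map measurable_fst.aemeasurable (hδm.pow_const 2).aestronglyMeasurable).symm
    _ ≤ ∫ x, 2 ^ (2 - q * ϑ) * (δ x ^ q) ^ ϑ ∂μ :=
        integral_mono_ae hδint (h_int.const_mul _) hsq
    _ = 2 ^ (2 - q * ϑ) * ∫ x, (δ x ^ q) ^ ϑ ∂μ := integral_const_mul _ _
    _ ≤ 2 ^ (2 - q * ϑ) * (K * Γ * ∫ x, E x ∂μ) ^ ϑ := by gcongr
    _ = 2 ^ (2 - ϑ) * q ^ ϑ * Γ ^ ϑ * (∫ o, D o ∂Q) ^ ϑ := by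
        rw [hEQ, Real.mul_rpow (by positivity) hEI, Real.mul_rpow hK0.le hΓ0, hK,
          Real.mul_rpow (by positivity) hq0.le, ← Real.rpow_mul (by norm_num),
          show 2 - ϑ = 2 - q * ϑ + (q - 1) * ϑ by ring, Real.rpow_add (by norm_num)]
        ring
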